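/- Let A := ℂ[X,Y,U,V]/⟨XV − YU − 1⟩ with x, y, u, v the images of X, Y, U, V, and let D : A → A be the ℂ-derivation with D x = D y = 0, D u = x, D v = y. For every ν ∈ ℕ, the set m_ν(A) := D^ν(ker D^{ν+1}) equals the ℂ-linear span of the monomials x^i y^j with i + j ≥ ν, i.e. the ν-th power of the ideal ⟨x, y⟩ of the subring ℂ[x, y] = ker D. (Equivalently, gr_D(𝒪(SL₂)) = ⊕_{ν≥0} ⟨x,y⟩^ν t^ν ⊆ ℂ[x,y][t].) -/

import Mathlib

/-!
Write `F n` for the span of the monomials `x^i y^j u^k v^l` with `k + l < n`. The heart of the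
matter is `ker D^n = F n`; granted this, `D^ν` maps a monomial with `k + l = ν` to
`ν! x^(i+k) y^(j+l)` and kills `F ν`, which gives both inclusions.

For `ker D^n ⊆ F n`, every element lies in some `F N`, so it suffices to go down one step: if
`a ∈ F (n+1)` and `D^n a = 0` then `a ∈ F n` (`mem_filt_of_iterate_eq_zero`). Since
`x v - y u = 1`, two monomials with `k + l = n` and the same exponents `(i+k, j+l)` agree modulo
`F n` (`mono_sub_mono_mem`). Hence modulo `F n` the element `a` is determined by the polynomial
`P` with `n! P(x, y) = D^n a`, through the linear map `lift n` (`exists_poly`). As `x` and `y` are algebraically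
independent (`polyMap_injective`), `D^n a = 0` forces `P = 0`, so `a ∈ F n`.
-/

open MvPolynomial

noncomputable section

/-- The ideal `⟨XV − YU − 1⟩` of `ℂ[X, Y, U, V]` (with `X = X 0`, `Y = X 1`, `U = X 2`,
`V = X 3`). -/
def sl2Ideal : Ideal (MvPolynomial (Fin 4) ℂ) :=
  Ideal.span {X 0 * X 3 - X 1 * X 2 - 1}

/-- The coordinate ring `A = ℂ[X,Y,U,V]/⟨XV − YU − 1⟩` of `SL₂` over `ℂ`. -/
abbrev SL2R : Type := MvPolynomial (Fin 4) ℂ ⧸ sl2Ideal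

/-- `x`, the image of `X` in `A`. -/
def sx : SL2R := Ideal.Quotient.mk sl2Ideal (X 0)
/-- `y`, the image of `Y` in `A`. -/
def sy : SL2R := Ideal.Quotient.mk sl2Ideal (X 1)
/-- `u`, the image of `U` in `A`. -/
def su : SL2R := Ideal.Quotient.mk sl2Ideal (X 2)
/-- `v`, the image of `V` in `A`. -/
def sv : SL2R := Ideal.Quotient.mk sl2Ideal (X 3)

lemma sl2_rel : sx * sv - sy * su = 1 := by
  have h : Ideal.Quotient.mk sl2Ideal (X 0 * X 3 - X 1 * X 2 - 1) = 0 :=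
    Ideal.Quotient.eq_zero_iff_mem.2 (Ideal.subset_span rfl)
  simp only [map_sub, map_mul, map_one] at h
  exact sub_eq_zero.1 h

/-- The monomial `x^i y^j u^k v^l` of `A`. -/
def mono (i j k l : ℕ) : SL2R := sx ^ i * sy ^ j * su ^ k * sv ^ l

/-- The subspace of `A` spanned by the monomials of total degree less than `n` in `u, v`. The
strict inequality makes `filt 0 = ⊥`. -/
def filt (n : ℕ) : Submodule ℂ SL2R :=
  Submodule.span ℂ {a | ∃ i j k l : ℕ, k + l < n ∧ a = mono i j k l}

lemma mono_mem {i j k l n : ℕ} (h : k + l < n) : mono i j k l ∈ filt n :=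
  Submodule.subset_span ⟨i, j, k, l, h, rfl⟩

lemma filt_mono {m n : ℕ} (h : m ≤ n) : filt m ≤ filt n := by
  apply Submodule.span_mono
  rintro _ ⟨i, j, k, l, hkl, rfl⟩
  exact ⟨i, j, k, l, by omega, rfl⟩

lemma exists_mem_filt (a : SL2R) : ∃ n, a ∈ filt n := by
  obtain ⟨p, rfl⟩ := Ideal.Quotient.mk_surjective a
  induction p using MvPolynomial.induction_on' with
  | monomial s c =>
    refine ⟨s 2 + s 3 + 1, ?_⟩
    have h : Ideal.Quotient.mk sl2Ideal (monomial s c)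
        = c • mono (s 0) (s 1) (s 2) (s 3) := by
      rw [← mul_one c, ← smul_eq_mul, ← MvPolynomial.smul_monomial]
      change Ideal.Quotient.mkₐ ℂ sl2Ideal _ = _
      rw [map_smul, MvPolynomial.monomial_eq, Finsupp.prod_fintype _ _ (by simp)]
      simp [Fin.prod_univ_four, mono, sx, sy, su, sv]
    rw [h]
    exact Submodule.smul_mem _ _ (mono_mem (by omega))
  | add p q hp hq =>
    obtain ⟨m, hm⟩ := hp
    obtain ⟨n, hn⟩ := hq
    refine ⟨max m n, ?_⟩
    rw [map_add]
    exact add_mem (filt_mono (le_max_left _ _) hm) (filt_mono (le_max_right _ _) hn)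

lemma mono_shift_mem (i j k l d : ℕ) :
    mono (i + d) j k (l + d) - mono i (j + d) (k + d) l ∈ filt (k + l + d) := by
  induction d generalizing i j k l with
  | zero => simp
  | succ d ih =>
    -- one exchange of `x v` for `y u` costs the lower-order monomial `mono (i + d) j k (l + d)`
    have h : mono (i + (d + 1)) j k (l + (d + 1)) - mono i (j + (d + 1)) (k + (d + 1)) l
        = mono (i + d) j k (l + d)
          + (mono (i + d) (j + 1) (k + 1) (l + d)
              - mono i (j + 1 + d) (k + 1 + d) l) := by
      have h1 : mono (i + (d + 1)) j k (l + (d + 1)) - mono (i + d) (j + 1) (k + 1) (l + d)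
          = mono (i + d) j k (l + d) * (sx * sv - sy * su) := by
        simp only [mono]; ring
      rw [sl2_rel, mul_one] at h1
      rw [← h1, show j + 1 + d = j + (d + 1) by ring, show k + 1 + d = k + (d + 1) by ring]
      ring
    rw [h]
    refine add_mem (mono_mem (by omega)) ?_
    have := ih i (j + 1) (k + 1) l
    rwa [show k + 1 + l + d = k + l + (d + 1) by ring] at this

/-- Modulo `filt n`, a monomial of degree `n` in `u, v` depends only on the exponents of its
image under `u ↦ x`, `v ↦ y`. -/
lemma mono_sub_mono_mem {i j k l i' j' k' l' n : ℕ} (h : k + l = n) (h' : k' + l' = n)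
    (hi : i + k = i' + k') (hj : j + l = j' + l') :
    mono i j k l - mono i' j' k' l' ∈ filt n := by
  rcases le_total k k' with hk | hk
  · obtain ⟨d, rfl⟩ := Nat.exists_eq_add_of_le hk
    obtain rfl : i = i' + d := by omega
    obtain rfl : l = l' + d := by omega
    obtain rfl : j' = j + d := by omega
    have := mono_shift_mem i' j k l' d
    rwa [show k + l' + d = n by omega] at this
  · obtain ⟨d, rfl⟩ := Nat.exists_eq_add_of_le hk
    obtain rfl : i' = i + d := by omega
    obtain rfl : l' = l + d := by omega
    obtain rfl : j = j' + d := by omega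
    have := mono_shift_mem i j' k' l d
    rw [show k' + l + d = n by omega] at this
    rw [← neg_sub]
    exact neg_mem this

/-- The substitution map `ℂ[X, Y] → A`, `P ↦ P(x, y)`. -/
def polyMap : MvPolynomial (Fin 2) ℂ →ₐ[ℂ] SL2R := aeval ![sx, sy]

/-- Injectivity is seen on the open set `x ≠ 0`, along the section `u = 0`, `v = 1/x`. -/
lemma polyMap_injective : Function.Injective polyMap := by
  let K := FractionRing (MvPolynomial (Fin 2) ℂ)
  let f : MvPolynomial (Fin 2) ℂ →ₐ[ℂ] K := Algebra.algHom ℂ _ K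
  have hf : Function.Injective f := IsFractionRing.injective (MvPolynomial (Fin 2) ℂ) K
  have hX : f (X 0) ≠ 0 := by
    rw [Ne, map_eq_zero_iff f hf]; exact X_ne_zero 0
  let g : MvPolynomial (Fin 4) ℂ →ₐ[ℂ] K := aeval ![f (X 0), f (X 1), 0, (f (X 0))⁻¹]
  have hg : ∀ a ∈ sl2Ideal, g a = 0 := by
    intro a ha
    have : sl2Ideal ≤ RingHom.ker g := by
      rw [sl2Ideal, Ideal.span_singleton_le_iff_mem, RingHom.mem_ker]
      simp [g, mul_inv_cancel₀ hX]
    exact this ha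
  let G : SL2R →ₐ[ℂ] K := Ideal.Quotient.liftₐ sl2Ideal g hg
  have hG : G.comp polyMap = f := by
    apply MvPolynomial.algHom_ext
    intro i
    fin_cases i
    · change G (polyMap (X 0)) = f (X 0)
      rw [polyMap, aeval_X]
      change g (X 0) = _
      simp [g]
    · change G (polyMap (X 1)) = f (X 1)
      rw [polyMap, aeval_X]
      change g (X 1) = _
      simp [g]
  have : Function.Injective (G ∘ polyMap) := by
    rw [← AlgHom.coe_comp, hG]; exact hf
  exact this.of_comp

/-- The linear map sending `X^p Y^q` to a monomial of degree `n` in `u, v` which `u ↦ x`,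
`v ↦ y` maps to `x^p y^q`; this has the intended meaning only for `p + q ≥ n`, and as many
factors `u` as possible are used. -/
def lift (n : ℕ) : MvPolynomial (Fin 2) ℂ →ₗ[ℂ] SL2R :=
  (MvPolynomial.basisMonomials (Fin 2) ℂ).constr ℂ fun s =>
    mono (s 0 - min (s 0) n) (s 1 - (n - min (s 0) n)) (min (s 0) n) (n - min (s 0) n)

section Derivation

variable (D : Derivation ℂ SL2R SL2R)

lemma iterate_eq_pow (n : ℕ) (a : SL2R) :
    (⇑D)^[n] a = ((D : SL2R →ₗ[ℂ] SL2R) ^ n) a := by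
  rw [Module.End.pow_apply]; rfl

/-- The coefficient `c` ranges over all constants of `D`: the induction on `n` moves the factors
`x` and `y` produced by the Leibniz rule into it. -/
lemma iterate_top (hu : D su = sx) (hv : D sv = sy) (hx : D sx = 0) (hy : D sy = 0)
    (n : ℕ) : ∀ (k l : ℕ) (c : SL2R), k + l = n → D c = 0 →
      ((D : SL2R →ₗ[ℂ] SL2R) ^ n) (c * su ^ k * sv ^ l)
        = (n.factorial : ℂ) • (c * sx ^ k * sy ^ l) := by
  induction n with
  | zero =>
    intro k l c h _
    obtain ⟨rfl, rfl⟩ : k = 0 ∧ l = 0 := by omega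
    simp
  | succ n ih =>
    intro k l c h hc
    have hcx : D (c * sx) = 0 := by simp [hc, hx]
    have hcy : D (c * sy) = 0 := by simp [hc, hy]
    have hD : D (c * su ^ k * sv ^ l)
        = (k : ℂ) • (c * sx * su ^ (k - 1) * sv ^ l)
          + (l : ℂ) • (c * sy * su ^ k * sv ^ (l - 1)) := by
      rw [Nat.cast_smul_eq_nsmul, Nat.cast_smul_eq_nsmul]
      simp only [Derivation.leibniz, Derivation.leibniz_pow, hc, hu, hv, smul_eq_mul,
        nsmul_eq_mul, mul_zero, add_zero]
      ring
    have e1 : (k : ℂ) • ((D : SL2R →ₗ[ℂ] SL2R) ^ n) (c * sx * su ^ (k - 1) * sv ^ l)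
        = (k : ℂ) • (n.factorial : ℂ) • (c * sx ^ k * sy ^ l) := by
      cases k with
      | zero => simp
      | succ k =>
        rw [Nat.add_sub_cancel, ih k l _ (by omega) hcx]
        congr 2; ring
    have e2 : (l : ℂ) • ((D : SL2R →ₗ[ℂ] SL2R) ^ n) (c * sy * su ^ k * sv ^ (l - 1))
        = (l : ℂ) • (n.factorial : ℂ) • (c * sx ^ k * sy ^ l) := by
      cases l with
      | zero => simp
      | succ l =>
        rw [Nat.add_sub_cancel, ih k l _ (by omega) hcy]
        congr 2; ring
    rw [pow_succ, Module.End.mul_apply]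
    change ((D : SL2R →ₗ[ℂ] SL2R) ^ n) (D _) = _
    rw [hD, map_add, map_smul, map_smul, e1, e2, ← add_smul, smul_smul, ← Nat.cast_add, h,
      Nat.factorial_succ, Nat.cast_mul]

lemma iterate_mono (hu : D su = sx) (hv : D sv = sy) (hx : D sx = 0) (hy : D sy = 0)
    (i j k l : ℕ) :
    ((D : SL2R →ₗ[ℂ] SL2R) ^ (k + l)) (mono i j k l)
      = ((k + l).factorial : ℂ) • (sx ^ (i + k) * sy ^ (j + l)) := by
  rw [mono, iterate_top D hu hv hx hy _ k l _ rfl (by simp [hx, hy])]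
  congr 1; ring

lemma iterate_filt (hu : D su = sx) (hv : D sv = sy) (hx : D sx = 0) (hy : D sy = 0)
    {n : ℕ} {a : SL2R} (ha : a ∈ filt n) : ((D : SL2R →ₗ[ℂ] SL2R) ^ n) a = 0 := by
  have : filt n ≤ LinearMap.ker ((D : SL2R →ₗ[ℂ] SL2R) ^ n) := by
    refine Submodule.span_le.2 ?_
    rintro _ ⟨i, j, k, l, h, rfl⟩
    obtain ⟨d, rfl⟩ := Nat.exists_eq_add_of_lt h
    rw [SetLike.mem_coe, LinearMap.mem_ker, show k + l + d + 1 = d + 1 + (k + l) by ring,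
      pow_add, Module.End.mul_apply, iterate_mono D hu hv hx hy, map_smul, pow_succ,
      Module.End.mul_apply]
    have h0 : (D : SL2R →ₗ[ℂ] SL2R) (sx ^ (i + k) * sy ^ (j + l)) = 0 := by
      change D _ = 0
      simp [hx, hy]
    rw [h0, map_zero, smul_zero]
  exact this ha

/-- Modulo `filt n`, an element of `filt (n + 1)` is the lift of a polynomial `P` which is
read off from its `n`-th derivative. -/
lemma exists_poly (hu : D su = sx) (hv : D sv = sy) (hx : D sx = 0) (hy : D sy = 0)
    {n : ℕ} {a : SL2R} (ha : a ∈ filt (n + 1)) :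
    ∃ P : MvPolynomial (Fin 2) ℂ,
      (n.factorial : ℂ) • polyMap P = ((D : SL2R →ₗ[ℂ] SL2R) ^ n) a ∧ a - lift n P ∈ filt n := by
  induction ha using Submodule.span_induction with
  | mem a h =>
    obtain ⟨i, j, k, l, h, rfl⟩ := h
    rcases Nat.lt_succ_iff_lt_or_eq.1 h with h | rfl
    · refine ⟨0, ?_, ?_⟩
      · rw [map_zero, smul_zero, iterate_filt D hu hv hx hy (mono_mem h)]
      · rw [map_zero, sub_zero]; exact mono_mem h
    · let s : Fin 2 →₀ ℕ := Finsupp.equivFunOnFinite.symm ![i + k, j + l]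
      have s0 : s 0 = i + k := rfl
      have s1 : s 1 = j + l := rfl
      refine ⟨monomial s 1, ?_, ?_⟩
      · rw [iterate_mono D hu hv hx hy, polyMap, aeval_monomial,
          Finsupp.prod_fintype _ _ (by simp)]
        simp [Fin.prod_univ_two, s0, s1]
      · have := (MvPolynomial.basisMonomials (Fin 2) ℂ).constr_basis ℂ (fun s =>
          mono (s 0 - min (s 0) (k + l)) (s 1 - (k + l - min (s 0) (k + l))) (min (s 0) (k + l))
            (k + l - min (s 0) (k + l))) s
        rw [MvPolynomial.coe_basisMonomials] at this
        rw [lift, this, s0, s1]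
        apply mono_sub_mono_mem <;> omega
  | zero => exact ⟨0, by simp, by simp⟩
  | add a b _ _ ha hb =>
    obtain ⟨P, hP, hP'⟩ := ha
    obtain ⟨Q, hQ, hQ'⟩ := hb
    refine ⟨P + Q, by rw [map_add, smul_add, hP, hQ, map_add], ?_⟩
    rw [map_add, add_sub_add_comm]
    exact add_mem hP' hQ'
  | smul c a _ ha =>
    obtain ⟨P, hP, hP'⟩ := ha
    refine ⟨c • P, by rw [map_smul, smul_comm, hP, map_smul], ?_⟩
    rw [map_smul, ← smul_sub]
    exact Submodule.smul_mem _ _ hP'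

lemma mem_filt_of_iterate_eq_zero (hu : D su = sx) (hv : D sv = sy) (hx : D sx = 0)
    (hy : D sy = 0) {n : ℕ} {a : SL2R} (ha : a ∈ filt (n + 1))
    (h : ((D : SL2R →ₗ[ℂ] SL2R) ^ n) a = 0) : a ∈ filt n := by
  obtain ⟨P, hP, hP'⟩ := exists_poly D hu hv hx hy ha
  rw [h, smul_eq_zero_iff_right (by exact_mod_cast n.factorial_ne_zero)] at hP
  obtain rfl := (map_eq_zero_iff polyMap polyMap_injective).1 hP
  simpa using hP'

lemma ker_le_filt (hu : D su = sx) (hv : D sv = sy) (hx : D sx = 0) (hy : D sy = 0)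
    {n : ℕ} {a : SL2R} (h : ((D : SL2R →ₗ[ℂ] SL2R) ^ n) a = 0) : a ∈ filt n := by
  obtain ⟨N, hN⟩ := exists_mem_filt a
  replace hN := filt_mono (Nat.le_add_left N n) hN
  induction N with
  | zero => exact hN
  | succ N ih =>
    refine ih (mem_filt_of_iterate_eq_zero D hu hv hx hy hN ?_)
    rw [Nat.add_comm n N, pow_add, Module.End.mul_apply, h, map_zero]

end Derivation

/-- For the derivation `D` on `A = 𝒪(SL₂)` with `D x = D y = 0`, `D u = x`,
`D v = y`, the set `m_ν(A) = D^ν(ker D^{ν+1})` equals the ℂ-linear span of the monomials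
`x^i y^j` with `i + j ≥ ν`, i.e. the `ν`-th power of the ideal `⟨x, y⟩` of
`ker D = ℂ[x, y]`. -/
theorem stmt9 (D : Derivation ℂ SL2R SL2R)
    (hx : D sx = 0) (hy : D sy = 0) (hu : D su = sx) (hv : D sv = sy) (ν : ℕ) :
    {s : SL2R | ∃ a : SL2R, (⇑D)^[ν + 1] a = 0 ∧ (⇑D)^[ν] a = s} =
      ↑(Submodule.span ℂ {a : SL2R | ∃ i j : ℕ, ν ≤ i + j ∧ a = sx ^ i * sy ^ j}) := by
  simp only [iterate_eq_pow]
  apply Set.Subset.antisymm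
  · rintro _ ⟨a, ha, rfl⟩
    have ha := ker_le_filt D hu hv hx hy ha
    suffices filt (ν + 1) ≤ Submodule.comap ((D : SL2R →ₗ[ℂ] SL2R) ^ ν)
        (Submodule.span ℂ {a : SL2R | ∃ i j : ℕ, ν ≤ i + j ∧ a = sx ^ i * sy ^ j}) from this ha
    refine Submodule.span_le.2 ?_
    rintro _ ⟨i, j, k, l, h, rfl⟩
    rw [SetLike.mem_coe, Submodule.mem_comap]
    rcases Nat.lt_succ_iff_lt_or_eq.1 h with h | rfl
    · rw [iterate_filt D hu hv hx hy (mono_mem h)]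
      exact zero_mem _
    · rw [iterate_mono D hu hv hx hy]
      exact Submodule.smul_mem _ _ (Submodule.subset_span ⟨_, _, by omega, rfl⟩)
  · suffices Submodule.span ℂ {a : SL2R | ∃ i j : ℕ, ν ≤ i + j ∧ a = sx ^ i * sy ^ j} ≤
        (LinearMap.ker ((D : SL2R →ₗ[ℂ] SL2R) ^ (ν + 1))).map ((D : SL2R →ₗ[ℂ] SL2R) ^ ν) from
      fun s hs => this hs
    refine Submodule.span_le.2 ?_
    rintro _ ⟨i, j, h, rfl⟩
    obtain ⟨k, l, hkl, hk, hl⟩ : ∃ k l, k + l = ν ∧ k ≤ i ∧ l ≤ j :=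
      ⟨min i ν, ν - min i ν, by omega, by omega, by omega⟩
    refine ⟨(ν.factorial : ℂ)⁻¹ • mono (i - k) (j - l) k l, ?_, ?_⟩
    · exact Submodule.smul_mem _ _ (iterate_filt D hu hv hx hy (mono_mem (by omega)))
    · subst hkl
      rw [map_smul, iterate_mono D hu hv hx hy, smul_smul,
        inv_mul_cancel₀ (by exact_mod_cast (k + l).factorial_ne_zero), one_smul,
        Nat.sub_add_cancel hk, Nat.sub_add_cancel hl]

end
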